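/- Let f : ℝ → ℝ be continuously differentiable and let u : ℝ^N → ℝ be C³ with Δu + f(u) = 0 on ℝ^N and DV ≡ 0 on U = {x : ∇u(x) ≠ 0}, where V = ∇u/‖∇u‖. Let w ∈ ℝ^N with ‖w‖ = 1, p ∈ ℝ^N, γ(t) = p + t w, and h = u ∘ γ, and assume h is nonconstant on ℝ. Let (a, b) be a connected component of {t ∈ ℝ : γ(t) ∈ U}, and assume a ∈ ℝ is finite. Then q = γ(a) is a critical point of u (∇u(q) = 0), f(u(q)) ≠ 0, and consequently Δu(q) ≠ 0 and Hess u(q) ≠ 0. -/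

import Mathlib

open RealInnerProductSpace MeasureTheory Filter

/-- The Hessian bilinear form of `u : ℝ^N → ℝ` at `x`, applied to `w₁, w₂`. -/
noncomputable def Hess {N : ℕ} (u : EuclideanSpace ℝ (Fin N) → ℝ)
    (x w₁ w₂ : EuclideanSpace ℝ (Fin N)) : ℝ :=
  fderiv ℝ (fun y => fderiv ℝ u y w₁) x w₂

/-- The Laplacian `Δu = tr Hess u`. -/
noncomputable def Lap {N : ℕ} (u : EuclideanSpace ℝ (Fin N) → ℝ)
    (x : EuclideanSpace ℝ (Fin N)) : ℝ :=
  ∑ i : Fin N, Hess u x (EuclideanSpace.single i 1) (EuclideanSpace.single i 1)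

/-- The normalized gradient `V = ∇u / ‖∇u‖` (junk value `0` where `∇u = 0`). -/
noncomputable def NGrad {N : ℕ} (u : EuclideanSpace ℝ (Fin N) → ℝ)
    (x : EuclideanSpace ℝ (Fin N)) : EuclideanSpace ℝ (Fin N) :=
  ‖gradient u x‖⁻¹ • gradient u x

/-- The squared Frobenius norm of a linear map on `ℝ^N`. -/
noncomputable def FrobSq {N : ℕ}
    (A : EuclideanSpace ℝ (Fin N) →L[ℝ] EuclideanSpace ℝ (Fin N)) : ℝ :=
  ∑ i : Fin N, ‖A (EuclideanSpace.single i 1)‖ ^ 2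

/-- The divergence `div Z = ∑ i ∂Zᵢ/∂xᵢ` of a vector field on `ℝ^N`. -/
noncomputable def Divg {N : ℕ} (Z : EuclideanSpace ℝ (Fin N) → EuclideanSpace ℝ (Fin N))
    (x : EuclideanSpace ℝ (Fin N)) : ℝ :=
  ∑ i : Fin N, ⟪fderiv ℝ Z x (EuclideanSpace.single i 1), EuclideanSpace.single i 1⟫

/-- The Frobenius inner product `⟨A, B⟩_F = ∑ᵢⱼ Aᵢⱼ Bᵢⱼ` of two linear maps on `ℝ^N`. -/
noncomputable def FrobInner {N : ℕ}
    (A B : EuclideanSpace ℝ (Fin N) →L[ℝ] EuclideanSpace ℝ (Fin N)) : ℝ :=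
  ∑ i : Fin N, ⟪A (EuclideanSpace.single i 1), B (EuclideanSpace.single i 1)⟫

/-!
Write `V` for the normalized gradient and `h = u ∘ γ`. Since `DV = 0`, the field `V` is a constant
unit vector `v` along `γ` over the component, and `D∇u` has its range in the line spanned by `V`;
its trace is therefore the eigenvalue for `V`, that is, `D∇u V = Δu V = -f(u) V`.
Hence `m = ⟪∇u ∘ γ, v⟫` satisfies `h' = k m` and `m' = -k f(h)` with `k = ⟪v, γ'⟫`, up to and
including the endpoint by continuity. At the endpoint `m = 0`, so if also `f(h) = 0` there, then
`(h, m)` starts at an equilibrium and stays there by uniqueness. This makes `m = 0` on the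
component, although `|m| = ‖∇u ∘ γ‖` does not vanish there.
-/

lemma differentiableAt_fderiv {E G : Type*} [NormedAddCommGroup E] [NormedSpace ℝ E]
    [NormedAddCommGroup G] [NormedSpace ℝ G] {u : E → G} {x : E} (hu : ContDiffAt ℝ 2 u x) :
    DifferentiableAt ℝ (fderiv ℝ u) x :=
  (hu.fderiv_right (m := 1) (by norm_num)).differentiableAt one_ne_zero

section Gradient

variable {E : Type*} [NormedAddCommGroup E] [InnerProductSpace ℝ E] [CompleteSpace E] {u : E → ℝ}

lemma contDiff_gradient {m n : WithTop ℕ∞} (hu : ContDiff ℝ n u) (hmn : m + 1 ≤ n) :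
    ContDiff ℝ m (gradient u) :=
  (InnerProductSpace.toDual ℝ E).symm.contDiff.comp (hu.fderiv_right hmn)

lemma differentiableAt_gradient {x : E} (hu : DifferentiableAt ℝ (fderiv ℝ u) x) :
    DifferentiableAt ℝ (gradient u) x :=
  (InnerProductSpace.toDual ℝ E).symm.differentiable.differentiableAt.comp x hu

lemma inner_fderiv_gradient_left (u : E → ℝ) (x v w : E) :
    ⟪fderiv ℝ (gradient u) x v, w⟫ = fderiv ℝ (fderiv ℝ u) x v w := by
  have hcomp : fderiv ℝ (gradient u) x v =
      (InnerProductSpace.toDual ℝ E).symm (fderiv ℝ (fderiv ℝ u) x v) :=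
    DFunLike.congr_fun ((InnerProductSpace.toDual ℝ E).symm.comp_fderiv (f := fderiv ℝ u)) v
  rw [hcomp, InnerProductSpace.toDual_symm_apply]

lemma isSymmetric_fderiv_gradient {x : E} (hu : ContDiffAt ℝ 2 u x) :
    (fderiv ℝ (gradient u) x).toLinearMap.IsSymmetric := fun v w => by
  rw [ContinuousLinearMap.coe_coe, real_inner_comm _ v, inner_fderiv_gradient_left,
    inner_fderiv_gradient_left]
  exact hu.isSymmSndFDerivAt (by simp) v w

end Gradient

section Normalize

open NormedSpace (normalize)

variable {E G : Type*} [NormedAddCommGroup E] [NormedSpace ℝ E] [NormedAddCommGroup G]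
  [InnerProductSpace ℝ G] {F : E → G} {x : E}

lemma differentiableAt_normalize (hF : DifferentiableAt ℝ F x) (hx : F x ≠ 0) :
    DifferentiableAt ℝ (fun y => normalize (F y)) x :=
  ((hF.norm ℝ hx).inv (norm_ne_zero_iff.2 hx)).smul hF

lemma fderiv_eq_smulRight_normalize (hF : DifferentiableAt ℝ F x) (hx : F x ≠ 0)
    (hV : fderiv ℝ (fun y => normalize (F y)) x = 0) :
    fderiv ℝ F x = (fderiv ℝ (fun y => ‖F y‖) x).smulRight (normalize (F x)) := by
  calc fderiv ℝ F x
      = fderiv ℝ (fun y => ‖F y‖ • normalize (F y)) x := by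
        simp only [NormedSpace.norm_smul_normalize]
    _ = (fderiv ℝ (fun y => ‖F y‖) x).smulRight (normalize (F x)) := by
        rw [fderiv_fun_smul (hF.norm ℝ hx) (differentiableAt_normalize hF hx), hV, smul_zero,
          zero_add]

end Normalize

section Curve

variable {E G : Type*} [NormedAddCommGroup E] [NormedSpace ℝ E] [NormedAddCommGroup G]
  [NormedSpace ℝ G]

lemma comp_eq_of_hasFDerivAt_zero {X : E → G} {γ : ℝ → E} {s : Set ℝ} (hs : Convex ℝ s)
    (hX : ∀ t ∈ s, HasFDerivAt X (0 : E →L[ℝ] G) (γ t)) (hγ : DifferentiableOn ℝ γ s)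
    {t₁ t₂ : ℝ} (ht₁ : t₁ ∈ s) (ht₂ : t₂ ∈ s) : X (γ t₁) = X (γ t₂) := by
  have hderiv : ∀ t ∈ s, HasDerivWithinAt (X ∘ γ) 0 s t := fun t ht => by
    simpa using (hX t ht).comp_hasDerivWithinAt t (hγ t ht).hasDerivWithinAt
  have hbound := hs.norm_image_sub_le_of_norm_hasDerivWithin_le hderiv (C := 0) (by simp) ht₂ ht₁
  rwa [zero_mul, norm_le_zero_iff, sub_eq_zero] at hbound

theorem eqOn_const_of_hasDerivWithinAt_smul {F : E → E} (hF : LocallyLipschitz F) {a c : ℝ}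
    {k : ℝ → ℝ} (hk : ContinuousOn k (Set.Icc a c)) {z : ℝ → E}
    (hz : ContinuousOn z (Set.Icc a c))
    (hz' : ∀ t ∈ Set.Ico a c, HasDerivWithinAt z (k t • F (z t)) (Set.Ici t) t)
    (h₀ : F (z a) = 0) : Set.EqOn z (fun _ => z a) (Set.Icc a c) := by
  rcases lt_or_ge c a with hca | hac
  · simp [hca]
  obtain ⟨K, hK⟩ :=
    (hF.locallyLipschitzOn (s := z '' Set.Icc a c)).exists_lipschitzOnWith_of_compact
      (isCompact_Icc.image_of_continuousOn hz)
  obtain ⟨C, hC⟩ := isCompact_Icc.exists_bound_of_continuousOn hk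
  have hkF : ∀ t ∈ Set.Ico a c,
      LipschitzOnWith (C.toNNReal * K) (fun y => k t • F y) (z '' Set.Icc a c) := fun t ht =>
    ((lipschitzWith_smul (k t)).comp_lipschitzOnWith hK).weaken <| by
      gcongr
      exact NNReal.le_toNNReal_of_coe_le (hC t (Set.Ico_subset_Icc_self ht))
  refine ODE_solution_unique_of_mem_Icc_right hkF hz hz'
    (fun t ht => Set.mem_image_of_mem z (Set.Ico_subset_Icc_self ht)) continuousOn_const
    (fun t _ => ?_) (fun _ _ => Set.mem_image_of_mem z (Set.left_mem_Icc.2 hac)) rfl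
  simpa only [h₀, smul_zero] using hasDerivWithinAt_const t (Set.Ici t) (z a)

end Curve

/-- The planar vector field `(h, m) ↦ (m, -f h)`, whose integral curves are the solutions of
`h'' + f(h) = 0` written as a first-order system. -/
def oscillatorField (f : ℝ → ℝ) (z : ℝ × ℝ) : ℝ × ℝ := (z.2, -f z.1)

lemma locallyLipschitz_oscillatorField {f : ℝ → ℝ} (hf : LocallyLipschitz f) :
    LocallyLipschitz (oscillatorField f) :=
  LipschitzWith.prod_snd.locallyLipschitz.prodMk
    ((LipschitzWith.id.neg.locallyLipschitz.comp hf).comp LipschitzWith.prod_fst.locallyLipschitz)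

section Component

variable {s : Set ℝ} {t₀ a : ℝ} {b : EReal}

lemma lt_and_Ioc_subset_of_connectedComponentIn_eq (ht₀ : t₀ ∈ s)
    (hcomp : connectedComponentIn s t₀ = {t : ℝ | (a : EReal) < (t : EReal) ∧ (t : EReal) < b}) :
    a < t₀ ∧ Set.Ioc a t₀ ⊆ s := by
  have hmem := mem_connectedComponentIn ht₀
  rw [hcomp] at hmem
  refine ⟨EReal.coe_lt_coe_iff.1 hmem.1, fun t ht => connectedComponentIn_subset s t₀ ?_⟩
  rw [hcomp]
  exact ⟨EReal.coe_lt_coe_iff.2 ht.1, (EReal.coe_le_coe_iff.2 ht.2).trans_lt hmem.2⟩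

lemma left_notMem_of_connectedComponentIn_eq (ht₀ : t₀ ∈ s)
    (hcomp : connectedComponentIn s t₀ = {t : ℝ | (a : EReal) < (t : EReal) ∧ (t : EReal) < b}) :
    a ∉ s := by
  intro ha
  obtain ⟨hat, hsub⟩ := lt_and_Ioc_subset_of_connectedComponentIn_eq ht₀ hcomp
  have hIcc : Set.Icc a t₀ ⊆ s := by
    rw [← Set.Ioc_insert_left hat.le]
    exact Set.insert_subset ha hsub
  have hmem : a ∈ connectedComponentIn s t₀ :=
    isPreconnected_Icc.subset_connectedComponentIn (Set.right_mem_Icc.2 hat.le) hIcc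
      (Set.left_mem_Icc.2 hat.le)
  rw [hcomp] at hmem
  exact hmem.1.false

end Component

section NormalizedGradient

variable {N : ℕ} {u : EuclideanSpace ℝ (Fin N) → ℝ} {v x : EuclideanSpace ℝ (Fin N)}

lemma Lap_eq_trace_fderiv_gradient (hu : DifferentiableAt ℝ (fderiv ℝ u) x) :
    Lap u x = LinearMap.trace ℝ _ (fderiv ℝ (gradient u) x).toLinearMap := by
  rw [LinearMap.trace_eq_sum_inner _ (EuclideanSpace.basisFun (Fin N) ℝ), Lap]
  refine Finset.sum_congr rfl fun i _ => ?_
  rw [EuclideanSpace.basisFun_apply, ContinuousLinearMap.coe_coe, real_inner_comm,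
    inner_fderiv_gradient_left, Hess, fderiv_clm_apply hu (differentiableAt_const _)]
  simp

lemma continuous_Lap (hu : ContDiff ℝ 2 u) : Continuous (Lap u) := by
  have hD : ContDiff ℝ 1 (fderiv ℝ u) := hu.fderiv_right (by norm_num)
  refine continuous_finsetSum _ fun i _ => ?_
  exact ((hD.clm_apply contDiff_const).continuous_fderiv one_ne_zero).clm_apply continuous_const

lemma fderiv_gradient_apply_NGrad (hu : DifferentiableAt ℝ (fderiv ℝ u) x)
    (hx : gradient u x ≠ 0) (hDV : fderiv ℝ (NGrad u) x = 0) :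
    fderiv ℝ (gradient u) x (NGrad u x) = Lap u x • NGrad u x := by
  have hrank : fderiv ℝ (gradient u) x =
      (fderiv ℝ (fun y => ‖gradient u y‖) x).smulRight (NGrad u x) :=
    fderiv_eq_smulRight_normalize (differentiableAt_gradient hu) hx hDV
  have htrace : Lap u x = fderiv ℝ (fun y => ‖gradient u y‖) x (NGrad u x) := by
    rw [Lap_eq_trace_fderiv_gradient hu, hrank]
    exact LinearMap.trace_smulRight _ _
  rw [htrace, hrank, ContinuousLinearMap.smulRight_apply]

/-- To second order at `x`, the function `u` varies only in the direction `v`: the gradient is a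
multiple of `v`, and `v` is an eigenvector of the Hessian which carries its whole trace. Unlike
`NGrad u x = v`, this is a closed condition on `x`, so it extends to critical points of `u`. -/
structure IsUnidirectionalAt (u : EuclideanSpace ℝ (Fin N) → ℝ)
    (v x : EuclideanSpace ℝ (Fin N)) : Prop where
  gradient_eq : gradient u x = ⟪gradient u x, v⟫ • v
  fderiv_gradient_apply : fderiv ℝ (gradient u) x v = Lap u x • v

lemma isClosed_setOf_isUnidirectionalAt (hu : ContDiff ℝ 2 u) (v : EuclideanSpace ℝ (Fin N)) :
    IsClosed {x | IsUnidirectionalAt u v x} := by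
  have hgrad : ContDiff ℝ 1 (gradient u) := contDiff_gradient hu (by norm_num)
  have hcont := hgrad.continuous
  have hLap := continuous_Lap hu
  have hHess : Continuous fun x => fderiv ℝ (gradient u) x v :=
    (hgrad.continuous_fderiv one_ne_zero).clm_apply continuous_const
  have hinter : {x | IsUnidirectionalAt u v x} =
      {x | gradient u x = ⟪gradient u x, v⟫ • v} ∩
        {x | fderiv ℝ (gradient u) x v = Lap u x • v} :=
    Set.ext fun _ => ⟨fun h => ⟨h.1, h.2⟩, fun h => ⟨h.1, h.2⟩⟩
  rw [hinter]
  exact (isClosed_eq hcont (by fun_prop)).inter (isClosed_eq hHess (by fun_prop))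

lemma isUnidirectionalAt_NGrad (hu : DifferentiableAt ℝ (fderiv ℝ u) x)
    (hx : gradient u x ≠ 0) (hDV : fderiv ℝ (NGrad u) x = 0) :
    IsUnidirectionalAt u (NGrad u x) x where
  gradient_eq := by
    have hpolar : ‖gradient u x‖ • NGrad u x = gradient u x :=
      NormedSpace.norm_smul_normalize _
    have hunit : ‖NGrad u x‖ = 1 := NormedSpace.norm_normalize_eq_one_iff.2 hx
    have hinner : ⟪gradient u x, NGrad u x⟫ = ‖gradient u x‖ := by
      nth_rw 1 [← hpolar]
      rw [real_inner_smul_left, real_inner_self_eq_norm_sq, hunit, one_pow, mul_one]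
    rw [hinner, hpolar]
  fderiv_gradient_apply := fderiv_gradient_apply_NGrad hu hx hDV

lemma isUnidirectionalAt_of_mem_Icc (hu : ContDiff ℝ 2 u)
    (hDV : ∀ x, gradient u x ≠ 0 → fderiv ℝ (NGrad u) x = 0)
    {γ : ℝ → EuclideanSpace ℝ (Fin N)} (hγ : Differentiable ℝ γ) {a c : ℝ} (hac : a < c)
    (hne : ∀ t ∈ Set.Ioc a c, gradient u (γ t) ≠ 0) {t : ℝ} (ht : t ∈ Set.Icc a c) :
    IsUnidirectionalAt u (NGrad u (γ c)) (γ t) := by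
  have hD : Differentiable ℝ (fderiv ℝ u) := fun _ => differentiableAt_fderiv hu.contDiffAt
  have hV : ∀ s ∈ Set.Ioc a c, HasFDerivAt (NGrad u) 0 (γ s) := fun s hs =>
    hDV _ (hne s hs) ▸ (differentiableAt_normalize (differentiableAt_gradient (hD _))
      (hne s hs)).hasFDerivAt
  have hIoc : Set.Ioc a c ⊆ γ ⁻¹' {x | IsUnidirectionalAt u (NGrad u (γ c)) x} := fun s hs => by
    rw [← comp_eq_of_hasFDerivAt_zero (convex_Ioc a c) hV hγ.differentiableOn hs
      (Set.right_mem_Ioc.2 hac)]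
    exact isUnidirectionalAt_NGrad (hD _) (hne s hs) (hDV _ (hne s hs))
  refine closure_minimal hIoc
    ((isClosed_setOf_isUnidirectionalAt hu _).preimage hγ.continuous) ?_
  rwa [closure_Ioc hac.ne]

lemma hasDerivAt_comp_prodMk_inner_gradient {f : ℝ → ℝ} {γ : ℝ → EuclideanSpace ℝ (Fin N)}
    {γ' : EuclideanSpace ℝ (Fin N)} {t : ℝ} (hu : ContDiffAt ℝ 2 u (γ t))
    (hγ : HasDerivAt γ γ' t) (hpde : Lap u (γ t) + f (u (γ t)) = 0)
    (hv : IsUnidirectionalAt u v (γ t)) :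
    HasDerivAt (fun s => (u (γ s), ⟪gradient u (γ s), v⟫))
      (⟪v, γ'⟫ • oscillatorField f (u (γ t), ⟪gradient u (γ t), v⟫)) t := by
  have hgrad : DifferentiableAt ℝ (gradient u) (γ t) :=
    differentiableAt_gradient (differentiableAt_fderiv hu)
  have hh : HasDerivAt (fun s => u (γ s)) (⟪v, γ'⟫ * ⟪gradient u (γ t), v⟫) t := by
    have hchain := (hu.differentiableAt two_ne_zero).hasFDerivAt.comp_hasDerivAt t hγ
    rwa [← inner_gradient_left, hv.gradient_eq, real_inner_smul_left, mul_comm] at hchain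
  have hm : HasDerivAt (fun s => ⟪gradient u (γ s), v⟫) (⟪v, γ'⟫ * -f (u (γ t))) t := by
    have hchain := (hgrad.hasFDerivAt.comp_hasDerivAt t hγ).inner ℝ (hasDerivAt_const t v)
    have hsymm : ⟪fderiv ℝ (gradient u) (γ t) γ', v⟫ = ⟪v, γ'⟫ * -f (u (γ t)) := by
      calc ⟪fderiv ℝ (gradient u) (γ t) γ', v⟫
          = ⟪γ', fderiv ℝ (gradient u) (γ t) v⟫ :=
            isSymmetric_fderiv_gradient hu γ' v
        _ = Lap u (γ t) * ⟪v, γ'⟫ := by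
            rw [hv.fderiv_gradient_apply, real_inner_smul_right, real_inner_comm]
        _ = ⟪v, γ'⟫ * -f (u (γ t)) := by rw [eq_neg_of_add_eq_zero_left hpde, mul_comm]
    rwa [inner_zero_right, zero_add, hsymm] at hchain
  exact hh.prodMk hm

theorem apply_ne_zero_of_gradient_eq_zero {f : ℝ → ℝ} (hf : LocallyLipschitz f)
    (hu : ContDiff ℝ 2 u) (hpde : ∀ x, Lap u x + f (u x) = 0)
    (hDV : ∀ x, gradient u x ≠ 0 → fderiv ℝ (NGrad u) x = 0)
    {γ : ℝ → EuclideanSpace ℝ (Fin N)} (hγ : ContDiff ℝ 1 γ) {a c : ℝ} (hac : a < c)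
    (ha : gradient u (γ a) = 0) (hne : ∀ t ∈ Set.Ioc a c, gradient u (γ t) ≠ 0) :
    f (u (γ a)) ≠ 0 := by
  intro hfa
  have hγd : Differentiable ℝ γ := hγ.differentiable one_ne_zero
  set v := NGrad u (γ c)
  set z : ℝ → ℝ × ℝ := fun t => (u (γ t), ⟪gradient u (γ t), v⟫)
  have hv : ∀ t ∈ Set.Icc a c, IsUnidirectionalAt u v (γ t) := fun t ht =>
    isUnidirectionalAt_of_mem_Icc hu hDV hγd hac hne ht
  have hz : ∀ t ∈ Set.Icc a c,
      HasDerivAt z (⟪v, deriv γ t⟫ • oscillatorField f (z t)) t := fun t ht =>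
    hasDerivAt_comp_prodMk_inner_gradient hu.contDiffAt (hγd t).hasDerivAt (hpde _) (hv t ht)
  have hk : Continuous fun t => ⟪v, deriv γ t⟫ :=
    continuous_const.inner (hγ.continuous_deriv le_rfl)
  have hequilibrium : oscillatorField f (z a) = 0 := by simp [oscillatorField, z, ha, hfa]
  have hzc : z c = z a :=
    eqOn_const_of_hasDerivWithinAt_smul (locallyLipschitz_oscillatorField hf) hk.continuousOn
      (fun t ht => (hz t ht).continuousAt.continuousWithinAt)
      (fun t ht => (hz t (Set.Ico_subset_Icc_self ht)).hasDerivWithinAt) hequilibrium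
      (Set.right_mem_Icc.2 hac.le)
  have hm : ⟪gradient u (γ c), v⟫ = 0 := by
    simpa [z, ha] using congrArg Prod.snd hzc
  refine hne c (Set.right_mem_Ioc.2 hac) ?_
  rw [(hv c (Set.right_mem_Icc.2 hac.le)).gradient_eq, hm, zero_smul]

end NormalizedGradient

theorem statement13_general {N : ℕ} {f : ℝ → ℝ} (hf : LocallyLipschitz f)
    {u : EuclideanSpace ℝ (Fin N) → ℝ} (hu : ContDiff ℝ 2 u)
    (hpde : ∀ x, Lap u x + f (u x) = 0)
    (hDV : ∀ x, gradient u x ≠ 0 → fderiv ℝ (NGrad u) x = 0)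
    {γ : ℝ → EuclideanSpace ℝ (Fin N)} (hγ : ContDiff ℝ 1 γ)
    {t₀ : ℝ} (ht₀ : gradient u (γ t₀) ≠ 0) {a : ℝ} {b : EReal}
    (hcomp : connectedComponentIn {t : ℝ | gradient u (γ t) ≠ 0} t₀ =
      {t : ℝ | (a : EReal) < (t : EReal) ∧ (t : EReal) < b}) :
    gradient u (γ a) = 0 ∧ f (u (γ a)) ≠ 0 ∧ Lap u (γ a) ≠ 0 ∧
      fderiv ℝ (gradient u) (γ a) ≠ 0 := by
  obtain ⟨hat, hne⟩ := lt_and_Ioc_subset_of_connectedComponentIn_eq ht₀ hcomp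
  have hcrit : gradient u (γ a) = 0 :=
    not_not.1 (left_notMem_of_connectedComponentIn_eq ht₀ hcomp)
  have hfa : f (u (γ a)) ≠ 0 := apply_ne_zero_of_gradient_eq_zero hf hu hpde hDV hγ hat hcrit hne
  have hLap : Lap u (γ a) ≠ 0 := fun h₀ => hfa <| by simpa [h₀] using hpde (γ a)
  refine ⟨hcrit, hfa, hLap, fun h₀ => hLap ?_⟩
  rw [Lap_eq_trace_fderiv_gradient (differentiableAt_fderiv hu.contDiffAt), h₀,
    ContinuousLinearMap.toLinearMap_zero, map_zero]

/-- flat-space instance of Lemma 3.5(b). If a connected component of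
`{t | γ(t) ∈ U}` is `(a, b)` with finite left endpoint `a`, then `q = γ(a)` is a critical
point of `u`, `f(u(q)) ≠ 0`, and consequently `Δu(q) ≠ 0` and `Hess u(q) ≠ 0`. -/
theorem statement13 {N : ℕ} (hN : 1 ≤ N) (f : ℝ → ℝ) (hf : ContDiff ℝ 1 f)
    (u : EuclideanSpace ℝ (Fin N) → ℝ) (hu : ContDiff ℝ 3 u)
    (hpde : ∀ x, Lap u x + f (u x) = 0)
    (hDV : ∀ x, gradient u x ≠ 0 → fderiv ℝ (NGrad u) x = 0)
    (w p : EuclideanSpace ℝ (Fin N)) (hw : ‖w‖ = 1)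
    (γ : ℝ → EuclideanSpace ℝ (Fin N)) (hγ : γ = fun t => p + t • w)
    (h : ℝ → ℝ) (hh : h = u ∘ γ)
    (hnc : ∃ s t, h s ≠ h t)
    (t₀ : ℝ) (ht₀ : gradient u (γ t₀) ≠ 0)
    (a : ℝ) (b : EReal) (hab : (a : EReal) < b)
    (hcomp : connectedComponentIn {t : ℝ | gradient u (γ t) ≠ 0} t₀ =
      {t : ℝ | (a : EReal) < (t : EReal) ∧ (t : EReal) < b}) :
    gradient u (γ a) = 0 ∧ f (u (γ a)) ≠ 0 ∧ Lap u (γ a) ≠ 0 ∧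
      fderiv ℝ (gradient u) (γ a) ≠ 0 := by
  have hγ₁ : ContDiff ℝ 1 γ := hγ ▸ by fun_prop
  exact statement13_general hf.locallyLipschitz (hu.of_le (by norm_num)) hpde hDV hγ₁ ht₀ hcomp
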